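/- Let Q(x₁,x₂,x₃,x₄) = a₁x₁² + a₂x₂² + a₃x₃² + a₄x₄² be a diagonal quadratic form with nonzero coefficients aᵢ ∈ 𝔽[t]. Then at least one of the following holds: (a) there exists a monic irreducible polynomial f ∈ 𝔽[t] such that Q has no nontrivial zero in the f-adic completion 𝔽_q(t)_(f); or (b) there exist a minimized diagonal quadratic form Q'(x₁,x₂,x₃,x₄) = b₁x₁² + b₂x₂² + b₃x₃² + b₄x₄², a nonzero g ∈ 𝔽_q(t), and an invertible 4×4 matrix M over 𝔽_q(t) such that g·Q(Mx) = Q'(x) for all x ∈ 𝔽_q(t)⁴ (i.e. Q' is projectively equivalent to Q). -/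

import Mathlib

open Polynomial IsDedekindDomain

set_option synthInstance.maxHeartbeats 1000000

/-- The height-one prime of `F[X]` generated by an irreducible polynomial `f`. -/
noncomputable def primeOfIrreducible {F : Type*} [Field F] {f : F[X]}
    (hf : Irreducible f) : HeightOneSpectrum F[X] where
  asIdeal := Ideal.span {f}
  isPrime := (Ideal.span_singleton_prime hf.ne_zero).mpr hf.prime
  ne_bot := by simpa [Ideal.span_singleton_eq_bot] using hf.ne_zero

/-- A diagonal quaternary quadratic form `a₁x₁² + a₂x₂² + a₃x₃² + a₄x₄²` with nonzero
coefficients `aᵢ ∈ 𝔽[t]` is minimized if: (1) each `aᵢ` is squarefree; (2) `a₁a₂a₃a₄` is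
cubefree; (3) whenever a monic irreducible `f` does not divide `aᵢ` and `aⱼ` but divides
the other two coefficients, `−aᵢaⱼ` is a square modulo `f`; (4) the number of square
leading coefficients among the `aᵢ` is at least the number of non-square ones. -/
def IsMinimized {F : Type*} [Field F] (a : Fin 4 → F[X]) : Prop :=
  (∀ m, a m ≠ 0) ∧
  (∀ m, Squarefree (a m)) ∧
  (∀ f : F[X], f.Monic → Irreducible f → ¬ f ^ 3 ∣ (a 0 * a 1 * a 2 * a 3)) ∧
  (∀ f : F[X], f.Monic → Irreducible f → ∀ i j k l : Fin 4,
      ({i, j, k, l} : Finset (Fin 4)) = Finset.univ →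
      ¬ f ∣ a i → ¬ f ∣ a j → f ∣ a k → f ∣ a l →
      IsSquare (Ideal.Quotient.mk (Ideal.span {f}) (-(a i * a j)))) ∧
  (Nat.card {m : Fin 4 // IsSquare ((a m).leadingCoeff)} ≥
    Nat.card {m : Fin 4 // ¬ IsSquare ((a m).leadingCoeff)})

section LocalPart

/-- `x` is a square modulo `h`. -/
def SqMod {R : Type*} [CommRing R] (h x : R) : Prop := ∃ r, h ∣ x - r ^ 2

lemma sqMod_iff {R : Type*} [CommRing R] (h x : R) :
    IsSquare (Ideal.Quotient.mk (Ideal.span {h}) x) ↔ SqMod h x := by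
  constructor
  · rintro ⟨s, hs⟩
    obtain ⟨r, rfl⟩ := Ideal.Quotient.mk_surjective s
    refine ⟨r, ?_⟩
    rw [← map_mul, Ideal.Quotient.eq, Ideal.mem_span_singleton] at hs
    rwa [pow_two]
  · rintro ⟨r, hr⟩
    refine ⟨Ideal.Quotient.mk _ r, ?_⟩
    rw [← map_mul, Ideal.Quotient.eq, Ideal.mem_span_singleton]
    rwa [← pow_two]

lemma sqMod_of_mul {R : Type*} [CommRing R] {h f x y e : R} (hc : IsCoprime f h)
    (hxy : f ^ 2 * x = y * e ^ 2) (hy : SqMod h y) : SqMod h x := by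
  obtain ⟨r, c, hr⟩ := hy
  obtain ⟨a, b, hab⟩ := hc
  refine ⟨a * (r * e), x * b * (1 + a * f) + a ^ 2 * e ^ 2 * c, ?_⟩
  linear_combination x * (1 + a * f) * (-hab) + a ^ 2 * hxy + a ^ 2 * e ^ 2 * hr

variable {F : Type*} [Field F] {f : F[X]} (hf : Irreducible f)

abbrev KQ := (primeOfIrreducible hf).adicCompletion (RatFunc F)

lemma val_poly (p : F[X]) :
    Valued.v (algebraMap F[X] (KQ hf) p) = (primeOfIrreducible hf).intValuation p := by
  rw [← HeightOneSpectrum.valuation_of_algebraMap (K := RatFunc F)]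
  exact HeightOneSpectrum.valuedAdicCompletion_eq_valuation _ p

lemma val_lt_one (p : F[X]) : Valued.v (algebraMap F[X] (KQ hf) p) < 1 ↔ f ∣ p := by
  rw [val_poly, HeightOneSpectrum.intValuation_lt_one_iff_mem]
  exact Ideal.mem_span_singleton

lemma val_le_one (p : F[X]) : Valued.v (algebraMap F[X] (KQ hf) p) ≤ 1 := by
  rw [val_poly]; exact HeightOneSpectrum.intValuation_le_one _ _

lemma val_eq_one {p : F[X]} (hp : ¬ f ∣ p) : Valued.v (algebraMap F[X] (KQ hf) p) = 1 := by
  refine le_antisymm (val_le_one hf p) ?_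
  rw [← not_lt, val_lt_one]; exact hp

lemma val_unif : Valued.v (algebraMap F[X] (KQ hf) f) = WithZero.exp (-1 : ℤ) := by
  rw [val_poly]
  exact HeightOneSpectrum.intValuation_singleton _ hf.ne_zero rfl

lemma exists_approx (z : (KQ hf)) (hz : Valued.v z ≤ 1) :
    ∃ r : F[X], Valued.v (z - algebraMap F[X] (KQ hf) r) < 1 := by
  have hd := HeightOneSpectrum.denseRange_algebraMap (K := RatFunc F) (v := primeOfIrreducible hf)
  have hopen : IsOpen {y : (KQ hf) | Valued.v (z - y) < 1} := by
    have h1 : IsOpen {y : (KQ hf) | Valued.v y < 1} := by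
      simpa only [Valuation.restrict_lt_one_iff] using Valued.isOpen_ball (KQ hf) 1
    exact h1.preimage (continuous_const.sub continuous_id)
  obtain ⟨k, hk⟩ := hd.exists_mem_open hopen ⟨z, by simp⟩
  have hk' : Valued.v (z - algebraMap (RatFunc F) (KQ hf) k) < 1 := hk
  have hk1 : Valued.v (algebraMap (RatFunc F) (KQ hf) k) ≤ 1 := by
    have : algebraMap (RatFunc F) (KQ hf) k = z - (z - algebraMap (RatFunc F) (KQ hf) k) := by ring
    rw [this]
    exact (Valuation.map_sub _ _ _).trans (max_le hz hk'.le)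
  have hv : ∀ k : RatFunc F, Valued.v (algebraMap (RatFunc F) (KQ hf) k)
      = (primeOfIrreducible hf).valuation (RatFunc F) k := fun k =>
    HeightOneSpectrum.valuedAdicCompletion_eq_valuation' _ k
  rw [hv] at hk1
  obtain ⟨r, hr⟩ := HeightOneSpectrum.exists_valuation_sub_lt_of_integer
    (v := primeOfIrreducible hf) hk1 1
  refine ⟨r, ?_⟩
  have e : z - algebraMap F[X] (KQ hf) r = (z - algebraMap (RatFunc F) (KQ hf) k)
      + algebraMap (RatFunc F) (KQ hf) (k - algebraMap F[X] (RatFunc F) r) := by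
    rw [map_sub, ← IsScalarTower.algebraMap_apply]; ring
  rw [e]
  refine Valuation.map_add_lt _ hk' ?_
  rw [hv, Valuation.map_sub_swap]
  exact hr

lemma binary_aux {p q : F[X]} (hp : ¬ f ∣ p) (_hq : ¬ f ∣ q)
    (hs : ¬ SqMod f (-(p * q))) {x y : (KQ hf)} (hx : x ≠ 0) (hxy : Valued.v y ≤ Valued.v x) :
    Valued.v (algebraMap F[X] (KQ hf) p * x ^ 2 + algebraMap F[X] (KQ hf) q * y ^ 2) = Valued.v x ^ 2 := by
  have hvx : Valued.v x ≠ 0 := (Valuation.ne_zero_iff _).2 hx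
  obtain ⟨z, rfl⟩ : ∃ z, y = z * x := ⟨y / x, by field_simp⟩
  have hz : Valued.v z ≤ 1 := by
    rw [map_mul] at hxy
    exact (mul_le_iff_le_one_left (zero_lt_iff.2 hvx)).1 hxy
  have e : algebraMap F[X] (KQ hf) p * x ^ 2 + algebraMap F[X] (KQ hf) q * (z * x) ^ 2
    = (algebraMap F[X] (KQ hf) p + algebraMap F[X] (KQ hf) q * z ^ 2) * x ^ 2 := by ring
  rw [e, map_mul, map_pow]
  suffices h : Valued.v (algebraMap F[X] (KQ hf) p + algebraMap F[X] (KQ hf) q * z ^ 2) = 1 by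
    rw [h, one_mul]
  refine le_antisymm ?_ ?_
  · refine (Valuation.map_add _ _ _).trans (max_le (val_le_one hf p) ?_)
    rw [map_mul, map_pow]
    exact mul_le_one' (val_le_one hf q) (pow_le_one' hz 2)
  · by_contra hlt
    rw [not_le] at hlt
    obtain ⟨r, hr⟩ := exists_approx hf z hz
    apply hs
    refine ⟨q * r, ?_⟩
    rw [← val_lt_one hf]
    have e2 : algebraMap F[X] (KQ hf) (-(p * q) - (q * r) ^ 2)
      = -(algebraMap F[X] (KQ hf) q) * (algebraMap F[X] (KQ hf) p + algebraMap F[X] (KQ hf) q * z ^ 2)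
        + algebraMap F[X] (KQ hf) (q ^ 2) * (z + algebraMap F[X] (KQ hf) r)
          * (z - algebraMap F[X] (KQ hf) r) := by
      simp only [map_sub, map_neg, map_mul, map_pow]; ring
    rw [e2]
    have hr1 : Valued.v (z + algebraMap F[X] (KQ hf) r) ≤ 1 :=
      (Valuation.map_add _ _ _).trans (max_le hz (val_le_one hf r))
    refine Valuation.map_add_lt _ ?_ ?_
    · rw [map_mul, Valuation.map_neg]
      exact (mul_le_of_le_one_left' (val_le_one hf q)).trans_lt hlt
    · rw [map_mul, map_mul]
      exact (mul_le_of_le_one_left' (mul_le_one' (val_le_one hf _) hr1)).trans_lt hr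

lemma binary {p q : F[X]} (hp : ¬ f ∣ p) (hq : ¬ f ∣ q)
    (hs : ¬ SqMod f (-(p * q))) (x y : (KQ hf)) :
    ∃ z : (KQ hf), Valued.v (algebraMap F[X] (KQ hf) p * x ^ 2 + algebraMap F[X] (KQ hf) q * y ^ 2)
      = Valued.v z ^ 2 ∧ (z = 0 → x = 0 ∧ y = 0) := by
  by_cases h0 : x = 0 ∧ y = 0
  · exact ⟨0, by simp [h0.1, h0.2], fun _ => h0⟩
  rcases le_total (Valued.v y) (Valued.v x) with h | h
  · have hx : x ≠ 0 := by
      rintro rfl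
      simp at h
      exact h0 ⟨rfl, h⟩
    exact ⟨x, binary_aux hf hp hq hs hx h, fun h => (hx h).elim⟩
  · have hy : y ≠ 0 := by
      rintro rfl
      simp at h
      exact h0 ⟨h, rfl⟩
    refine ⟨y, ?_, fun h => (hy h).elim⟩
    rw [add_comm]
    exact binary_aux hf hq hp (by rwa [mul_comm]) hy h

lemma quaternary {p q u w : F[X]} (hp : ¬ f ∣ p) (hq : ¬ f ∣ q) (hu : ¬ f ∣ u) (hw : ¬ f ∣ w)
    (hs : ¬ SqMod f (-(p * q))) (hs' : ¬ SqMod f (-(u * w))) (x y z t : (KQ hf))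
    (h : algebraMap F[X] (KQ hf) p * x ^ 2 + algebraMap F[X] (KQ hf) q * y ^ 2
      + algebraMap F[X] (KQ hf) (f * u) * z ^ 2 + algebraMap F[X] (KQ hf) (f * w) * t ^ 2 = 0) :
    x = 0 ∧ y = 0 ∧ z = 0 ∧ t = 0 := by
  obtain ⟨r, hr, hr0⟩ := binary hf hp hq hs x y
  obtain ⟨s, hs, hs0⟩ := binary hf hu hw hs' z t
  have e : algebraMap F[X] (KQ hf) p * x ^ 2 + algebraMap F[X] (KQ hf) q * y ^ 2
      = -(algebraMap F[X] (KQ hf) f * (algebraMap F[X] (KQ hf) u * z ^ 2 + algebraMap F[X] (KQ hf) w * t ^ 2)) := by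
    rw [map_mul, map_mul] at h
    linear_combination h
  rw [e, Valuation.map_neg, map_mul, hs, val_unif] at hr
  by_cases hsz : s = 0
  · subst hsz
    have : r = 0 := by
      simpa using hr.symm
    exact ⟨(hr0 this).1, (hr0 this).2, (hs0 rfl).1, (hs0 rfl).2⟩
  · exfalso
    have hvs : Valued.v s ≠ 0 := (Valuation.ne_zero_iff _).2 hsz
    have hvr : Valued.v r ≠ 0 := by
      intro h0
      rw [h0] at hr
      simp [hsz] at hr
    have := congrArg WithZero.log hr
    rw [WithZero.log_mul (by simp) (pow_ne_zero _ hvs), WithZero.log_pow, WithZero.log_pow,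
      WithZero.log_exp] at this
    simp at this
    omega

end LocalPart
section GlobalPart

variable {F : Type*} [Field F]

/-- Diagonal projective equivalence. -/
def DEquiv (a b : Fin 4 → F[X]) : Prop :=
  ∃ (g : RatFunc F) (c : Fin 4 → RatFunc F), g ≠ 0 ∧ (∀ m, c m ≠ 0) ∧
    ∀ m, g * algebraMap F[X] (RatFunc F) (a m) * c m ^ 2 = algebraMap F[X] (RatFunc F) (b m)

lemma DEquiv.refl (a : Fin 4 → F[X]) : DEquiv a a :=
  ⟨1, fun _ => 1, one_ne_zero, fun _ => one_ne_zero, fun m => by simp⟩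

lemma DEquiv.trans {a b c : Fin 4 → F[X]} (h : DEquiv a b) (h' : DEquiv b c) : DEquiv a c := by
  obtain ⟨g, d, hg, hd, h⟩ := h
  obtain ⟨g', d', hg', hd', h'⟩ := h'
  refine ⟨g' * g, fun m => d' m * d m, mul_ne_zero hg' hg,
    fun m => mul_ne_zero (hd' m) (hd m), fun m => ?_⟩
  rw [← h', ← h]; ring

lemma algMap_ne {p : F[X]} (hp : p ≠ 0) : algebraMap F[X] (RatFunc F) p ≠ 0 := by
  simpa using hp

/-- Multiply the form by `f` and remove squares of `f`. -/
noncomputable def swapAt (f : F[X]) (b : Fin 4 → F[X]) (m : Fin 4) : F[X] :=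
  open Classical in if f ∣ b m then b m / f else f * b m

lemma swapAt_pos {f : F[X]} {b : Fin 4 → F[X]} {m : Fin 4} (hf0 : f ≠ 0) (h : f ∣ b m) :
    b m = f * swapAt f b m := by
  rw [swapAt, if_pos h, EuclideanDomain.mul_div_cancel' hf0 h]

lemma swapAt_neg {f : F[X]} {b : Fin 4 → F[X]} {m : Fin 4} (h : ¬ f ∣ b m) :
    swapAt f b m = f * b m := by
  rw [swapAt, if_neg h]

lemma swapAt_ne {f : F[X]} {b : Fin 4 → F[X]} (hf0 : f ≠ 0) (hb : ∀ m, b m ≠ 0) (m : Fin 4) :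
    swapAt f b m ≠ 0 := by
  by_cases h : f ∣ b m
  · have := swapAt_pos hf0 h
    intro h0
    rw [h0, mul_zero] at this
    exact hb m this
  · rw [swapAt_neg h]; exact mul_ne_zero hf0 (hb m)

lemma swapAt_sq {f : F[X]} {b : Fin 4 → F[X]} (hf0 : f ≠ 0) (m : Fin 4) :
    ∃ e, (e = 1 ∨ e = f) ∧ f * swapAt f b m = b m * e ^ 2 := by
  by_cases h : f ∣ b m
  · exact ⟨1, Or.inl rfl, by rw [← swapAt_pos hf0 h]; ring⟩
  · exact ⟨f, Or.inr rfl, by rw [swapAt_neg h]; ring⟩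

lemma swapAt_equiv {f : F[X]} (b : Fin 4 → F[X]) (hf0 : f ≠ 0) : DEquiv b (swapAt f b) := by
  classical
  have hF := algMap_ne hf0
  choose e he1 he2 using fun m => swapAt_sq (b := b) hf0 m
  refine ⟨algebraMap F[X] (RatFunc F) f,
    fun m => algebraMap F[X] (RatFunc F) (e m) / algebraMap F[X] (RatFunc F) f, hF,
    fun m => div_ne_zero (algMap_ne ?_) hF, fun m => ?_⟩
  · rcases he1 m with h | h <;> rw [h]
    · exact one_ne_zero
    · exact hf0
  · have := congrArg (algebraMap F[X] (RatFunc F)) (he2 m)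
    rw [map_mul, map_mul, map_pow] at this
    field_simp
    linear_combination -this

lemma swapAt_degree {f : F[X]} {b : Fin 4 → F[X]} (hf0 : f ≠ 0) (hb : ∀ m, b m ≠ 0) (m : Fin 4) :
    open Classical in (swapAt f b m).natDegree + 2 * f.natDegree * (if f ∣ b m then 1 else 0)
      = (b m).natDegree + f.natDegree := by
  classical
  by_cases h : f ∣ b m
  · rw [if_pos h]
    conv_rhs => rw [swapAt_pos hf0 h]
    rw [natDegree_mul hf0 (swapAt_ne hf0 hb m)]
    ring
  · rw [if_neg h, swapAt_neg h, natDegree_mul hf0 (hb m)]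
    ring

lemma swapAt_degree_sum {f : F[X]} {b : Fin 4 → F[X]} (hf0 : f ≠ 0) (hb : ∀ m, b m ≠ 0) :
    open Classical in (∑ m, (swapAt f b m).natDegree)
        + 2 * f.natDegree * (∑ m, if f ∣ b m then 1 else 0)
      = (∑ m, (b m).natDegree) + 4 * f.natDegree := by
  classical
  have := Finset.sum_congr (rfl : (Finset.univ : Finset (Fin 4)) = Finset.univ)
    (fun m _ => swapAt_degree hf0 hb m)
  rw [Finset.sum_add_distrib, ← Finset.mul_sum, Finset.sum_add_distrib] at this
  simpa using this

lemma count_of_cube {f : F[X]} (hf : Irreducible f) {b : Fin 4 → F[X]}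
    (hsq : ∀ m, Squarefree (b m)) (h : f ^ 3 ∣ b 0 * b 1 * b 2 * b 3) :
    open Classical in 3 ≤ ∑ m, if f ∣ b m then 1 else 0 := by
  classical
  have h1 : f ^ 3 ∣ ∏ m, b m := by rwa [Fin.prod_univ_four]
  have h2 := le_emultiplicity_of_pow_dvd h1
  rw [Finset.emultiplicity_prod hf.prime] at h2
  have h3 : ∑ m, emultiplicity f (b m) ≤ ∑ m, ((if f ∣ b m then 1 else 0 : ℕ) : ℕ∞) := by
    refine Finset.sum_le_sum fun m _ => ?_
    by_cases hd : f ∣ b m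
    · rw [if_pos hd]
      exact ((squarefree_iff_emultiplicity_le_one _).1 (hsq m) f).resolve_right hf.not_isUnit
    · rw [if_neg hd, emultiplicity_eq_zero.2 hd]; simp
  have h4 := h2.trans h3
  rw [← Nat.cast_sum] at h4
  exact_mod_cast h4

/-- The primes at which the third condition fails. -/
def badSet (b : Fin 4 → F[X]) : Set F[X] :=
  {f | f.Monic ∧ Irreducible f ∧ ∃ i j k l : Fin 4,
      ({i, j, k, l} : Finset (Fin 4)) = Finset.univ ∧
      ¬ f ∣ b i ∧ ¬ f ∣ b j ∧ f ∣ b k ∧ f ∣ b l ∧ ¬ SqMod f (-(b i * b j))}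

lemma badSet_finite {b : Fin 4 → F[X]} (hb : ∀ m, b m ≠ 0) : (badSet b).Finite := by
  classical
  refine Set.Finite.subset (s := ⋃ m, ((UniqueFactorizationMonoid.normalizedFactors
    (b m)).toFinset : Set F[X])) (Set.finite_iUnion fun m => Finset.finite_toSet _) ?_
  rintro f ⟨hm, hi, i, j, k, l, -, -, -, hk, -⟩
  refine Set.mem_iUnion.2 ⟨k, ?_⟩
  simp only [Finset.mem_coe, Multiset.mem_toFinset]
  exact (UniqueFactorizationMonoid.mem_normalizedFactors_iff' (hb k)).2
    ⟨hi, hm.normalize_eq_self, hk⟩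

lemma fin4_distinct : ∀ i j k l : Fin 4, ({i, j, k, l} : Finset (Fin 4)) = Finset.univ →
    i ≠ j ∧ i ≠ k ∧ i ≠ l ∧ j ≠ k ∧ j ≠ l ∧ k ≠ l := by decide

lemma fin4_cover {i j k l : Fin 4} (h : ({i, j, k, l} : Finset (Fin 4)) = Finset.univ)
    (m : Fin 4) : m = i ∨ m = j ∨ m = k ∨ m = l := by
  have : m ∈ ({i, j, k, l} : Finset (Fin 4)) := by rw [h]; exact Finset.mem_univ m
  simpa using this

lemma swapAt_dvd_self {f : F[X]} (hf : Irreducible f) {b : Fin 4 → F[X]}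
    (hsq : ∀ m, Squarefree (b m)) (m : Fin 4) : f ∣ swapAt f b m ↔ ¬ f ∣ b m := by
  constructor
  · intro h hd
    have e := swapAt_pos hf.ne_zero hd
    exact hf.not_isUnit (hsq m f (e ▸ mul_dvd_mul_left f h))
  · intro h
    rw [swapAt_neg h]; exact dvd_mul_right _ _

lemma swapAt_dvd_other {f h : F[X]} (hf0 : f ≠ 0) (hh : Irreducible h) (hfh : ¬ h ∣ f)
    {b : Fin 4 → F[X]} (m : Fin 4) : h ∣ swapAt f b m ↔ h ∣ b m := by
  by_cases hd : f ∣ b m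
  · have e := swapAt_pos hf0 hd
    rw [e]
    constructor
    · intro h1; rw [← e]; rw [e]; exact h1.mul_left _
    · intro h1; exact (hh.prime.dvd_or_dvd h1).resolve_left hfh
  · rw [swapAt_neg hd]
    exact ⟨fun h1 => (hh.prime.dvd_or_dvd h1).resolve_left hfh, fun h1 => h1.mul_left _⟩

lemma badSet_swap {f : F[X]} (hfm : f.Monic) (hf : Irreducible f) {b : Fin 4 → F[X]}
    (hsq : ∀ m, Squarefree (b m)) {i j k l : Fin 4}
    (hu : ({i, j, k, l} : Finset (Fin 4)) = Finset.univ)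
    (hi : ¬ f ∣ b i) (hj : ¬ f ∣ b j)
    (hs' : SqMod f (-(swapAt f b k * swapAt f b l))) :
    badSet (swapAt f b) ⊆ badSet b \ {f} := by
  rintro h ⟨hm, hh, i', j', k', l', hu', hi', hj', hk', hl', hns⟩
  by_cases hfh : h = f
  · exfalso
    subst hfh
    rw [swapAt_dvd_self hf hsq, not_not] at hi' hj'
    have hne := (fin4_distinct _ _ _ _ hu').1
    have h1 : i' = k ∨ i' = l := by
      rcases fin4_cover hu i' with rfl | rfl | h | h
      · exact absurd hi' hi
      · exact absurd hi' hj
      · exact Or.inl h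
      · exact Or.inr h
    have h2 : j' = k ∨ j' = l := by
      rcases fin4_cover hu j' with rfl | rfl | h | h
      · exact absurd hj' hi
      · exact absurd hj' hj
      · exact Or.inl h
      · exact Or.inr h
    rcases h1 with rfl | rfl <;> rcases h2 with rfl | rfl
    · exact hne rfl
    · exact hns hs'
    · exact hns (by rwa [mul_comm])
    · exact hne rfl
  · have hndvd : ¬ h ∣ f := fun hd =>
      hfh (eq_of_monic_of_associated hm hfm (hh.associated_of_dvd hf hd))
    refine ⟨⟨hm, hh, i', j', k', l', hu', ?_, ?_, ?_, ?_, ?_⟩, hfh⟩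
    · rwa [swapAt_dvd_other hf.ne_zero hh hndvd] at hi'
    · rwa [swapAt_dvd_other hf.ne_zero hh hndvd] at hj'
    · rwa [swapAt_dvd_other hf.ne_zero hh hndvd] at hk'
    · rwa [swapAt_dvd_other hf.ne_zero hh hndvd] at hl'
    · intro hsq'
      obtain ⟨e, -, he⟩ := swapAt_sq (b := b) hf.ne_zero i'
      obtain ⟨e', -, he'⟩ := swapAt_sq (b := b) hf.ne_zero j'
      refine hns (sqMod_of_mul (f := f) (e := e * e') ?_ ?_ hsq')
      · exact ((hh.coprime_iff_not_dvd).2 hndvd).symm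
      · linear_combination (-f * swapAt f b j') * he - b i' * e ^ 2 * he'

/-- Removing a square factor. -/
lemma remove_square {b : Fin 4 → F[X]} (hb : ∀ m, b m ≠ 0) {m : Fin 4}
    (h : ¬ Squarefree (b m)) : ∃ b' : Fin 4 → F[X], (∀ m, b' m ≠ 0) ∧ DEquiv b b' ∧
      ∑ m, (b' m).natDegree < ∑ m, (b m).natDegree := by
  classical
  rw [Squarefree] at h
  push Not at h
  obtain ⟨x, ⟨u, hu⟩, hx⟩ := h
  have hx0 : x ≠ 0 := by rintro rfl; exact hb m (by rw [hu]; ring)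
  have hu0 : u ≠ 0 := by rintro rfl; exact hb m (by rw [hu]; ring)
  have hdeg : 0 < x.natDegree := by
    rw [Nat.pos_iff_ne_zero]
    intro h0
    exact hx (isUnit_iff_degree_eq_zero.2 (by rw [degree_eq_natDegree hx0, h0]; rfl))
  have hX := algMap_ne hx0
  refine ⟨Function.update b m u, ?_, ⟨1, Function.update (fun _ => 1) m
    (algebraMap F[X] (RatFunc F) x)⁻¹, one_ne_zero, ?_, ?_⟩, ?_⟩
  · intro n
    by_cases hn : n = m
    · subst hn; simpa using hu0
    · simpa [hn] using hb n
  · intro n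
    by_cases hn : n = m
    · subst hn; simpa using hx0
    · simp [hn]
  · intro n
    by_cases hn : n = m
    · subst hn
      rw [Function.update_self, Function.update_self, hu, map_mul, map_mul]
      field_simp
    · simp [hn]
  · refine Finset.sum_lt_sum (fun n _ => ?_) ⟨m, Finset.mem_univ _, ?_⟩
    · by_cases hn : n = m
      · subst hn
        rw [Function.update_self, hu, natDegree_mul (mul_ne_zero hx0 hx0) hu0]
        omega
      · simp [hn]
    · rw [Function.update_self, hu, natDegree_mul (mul_ne_zero hx0 hx0) hu0,
        natDegree_mul hx0 hx0]
      omega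

/-- The first part of the definition of minimized forms. -/
def Pre (b : Fin 4 → F[X]) : Prop :=
  (∀ m, b m ≠ 0) ∧
  (∀ m, Squarefree (b m)) ∧
  (∀ f : F[X], f.Monic → Irreducible f → ¬ f ^ 3 ∣ (b 0 * b 1 * b 2 * b 3)) ∧
  (∀ f : F[X], f.Monic → Irreducible f → ∀ i j k l : Fin 4,
      ({i, j, k, l} : Finset (Fin 4)) = Finset.univ →
      ¬ f ∣ b i → ¬ f ∣ b j → f ∣ b k → f ∣ b l → SqMod f (-(b i * b j)))

/-- Anisotropy at a prime. -/
def Aniso (b : Fin 4 → F[X]) {f : F[X]} (hf : Irreducible f) : Prop :=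
  ∀ x : Fin 4 → (primeOfIrreducible hf).adicCompletion (RatFunc F),
    ∑ m, algebraMap F[X] ((primeOfIrreducible hf).adicCompletion (RatFunc F)) (b m)
      * x m ^ 2 = 0 → x = 0

lemma aniso_of_equiv {a b : Fin 4 → F[X]} (h : DEquiv a b) {f : F[X]} (hf : Irreducible f)
    (hb : Aniso b hf) : Aniso a hf := by
  obtain ⟨g, c, hg, hc, h⟩ := h
  intro x hx
  have hc' : ∀ m, algebraMap (RatFunc F) (KQ hf) (c m) ≠ 0 := fun m => by simpa using hc m
  have key := hb (fun m => x m / algebraMap (RatFunc F) (KQ hf) (c m)) (by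
    rw [← mul_zero (algebraMap (RatFunc F) (KQ hf) g), ← hx, Finset.mul_sum]
    refine Finset.sum_congr rfl fun m _ => ?_
    have h1 := congrArg (algebraMap (RatFunc F) (KQ hf)) (h m)
    rw [map_mul, map_mul, map_pow, ← IsScalarTower.algebraMap_apply,
      ← IsScalarTower.algebraMap_apply] at h1
    rw [← h1]
    have := hc' m
    field_simp)
  funext m
  have := congrFun key m
  simpa [hc m] using this

lemma aniso_of_bad {f : F[X]} (hf : Irreducible f) {b : Fin 4 → F[X]}
    (hsq : ∀ m, Squarefree (b m)) {i j k l : Fin 4}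
    (hu : ({i, j, k, l} : Finset (Fin 4)) = Finset.univ)
    (hi : ¬ f ∣ b i) (hj : ¬ f ∣ b j) (hk : f ∣ b k) (hl : f ∣ b l)
    (hs : ¬ SqMod f (-(b i * b j)))
    (hs' : ¬ SqMod f (-(swapAt f b k * swapAt f b l))) : Aniso b hf := by
  intro x hx
  obtain ⟨h1, h2, h3, h4, h5, h6⟩ := fin4_distinct _ _ _ _ hu
  rw [← hu, Finset.sum_insert (by simp [h1, h2, h3]), Finset.sum_insert (by simp [h4, h5]),
    Finset.sum_insert (by simp [h6]), Finset.sum_singleton] at hx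
  have hk' : ¬ f ∣ swapAt f b k := by rw [swapAt_dvd_self hf hsq]; simpa using hk
  have hl' : ¬ f ∣ swapAt f b l := by rw [swapAt_dvd_self hf hsq]; simpa using hl
  obtain ⟨r1, r2, r3, r4⟩ := quaternary hf hi hj hk' hl' hs hs' (x i) (x j) (x k) (x l) (by
    rw [← swapAt_pos hf.ne_zero hk, ← swapAt_pos hf.ne_zero hl, ← hx]; ring)
  funext m
  rcases fin4_cover hu m with rfl | rfl | rfl | rfl
  · exact r1
  · exact r2
  · exact r3
  · exact r4

lemma exists_pre (a : Fin 4 → F[X]) (ha : ∀ m, a m ≠ 0) :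
    (∃ (f : F[X]) (_ : f.Monic) (hf : Irreducible f), Aniso a hf) ∨
      ∃ b, DEquiv a b ∧ Pre b := by
  classical
  let μ : (Fin 4 → F[X]) → ℕ ×ₗ ℕ := fun b => toLex (∑ m, (b m).natDegree, (badSet b).ncard)
  obtain ⟨b, ⟨hb, hab⟩, hmin⟩ := (InvImage.wf μ wellFounded_lt).has_min
    {b | (∀ m, b m ≠ 0) ∧ DEquiv a b} ⟨a, ha, DEquiv.refl a⟩
  have hdeg : ∀ b', (∀ m, b' m ≠ 0) → DEquiv b b' →
      ¬ ∑ m, (b' m).natDegree < ∑ m, (b m).natDegree := by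
    intro b' hb' he hlt
    exact hmin b' ⟨hb', hab.trans he⟩ (Prod.Lex.toLex_lt_toLex.2 (Or.inl hlt))
  have hsq : ∀ m, Squarefree (b m) := by
    intro m
    by_contra h
    obtain ⟨b', h1, h2, h3⟩ := remove_square hb h
    exact hdeg b' h1 h2 h3
  by_cases hcase : ∃ (f : F[X]) (_ : f.Monic) (hf : Irreducible f), Aniso a hf
  · exact Or.inl hcase
  refine Or.inr ⟨b, hab, hb, hsq, ?_, ?_⟩
  · intro f hfm hf h3
    refine hdeg _ (swapAt_ne hf.ne_zero hb) (swapAt_equiv b hf.ne_zero) ?_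
    have h1 := swapAt_degree_sum hf.ne_zero hb
    have h2 := count_of_cube hf hsq h3
    have h4 := hf.natDegree_pos
    have h5 := Nat.mul_le_mul_left (2 * f.natDegree) h2
    omega
  · intro f hfm hf i j k l hu hi hj hk hl
    by_contra hs
    by_cases hs' : SqMod f (-(swapAt f b k * swapAt f b l))
    · have hle : ∑ m, (swapAt f b m).natDegree ≤ ∑ m, (b m).natDegree := by
        have h1 := swapAt_degree_sum hf.ne_zero hb
        obtain ⟨-, -, -, -, -, hkl⟩ := fin4_distinct _ _ _ _ hu
        have h2 : 2 ≤ ∑ m, if f ∣ b m then 1 else 0 := by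
          calc 2 = ∑ m ∈ ({k, l} : Finset (Fin 4)), if f ∣ b m then 1 else 0 := by
                rw [Finset.sum_pair hkl, if_pos hk, if_pos hl]
            _ ≤ _ := Finset.sum_le_sum_of_subset (Finset.subset_univ _)
        have h5 := Nat.mul_le_mul_left (2 * f.natDegree) h2
        omega
      have heq := le_antisymm hle (not_lt.1 (hdeg _ (swapAt_ne hf.ne_zero hb)
        (swapAt_equiv b hf.ne_zero)))
      refine hmin (swapAt f b) ⟨swapAt_ne hf.ne_zero hb, hab.trans (swapAt_equiv b hf.ne_zero)⟩
        (Prod.Lex.toLex_lt_toLex.2 (Or.inr ⟨heq, ?_⟩))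
      refine Set.ncard_lt_ncard ?_ (badSet_finite hb)
      have hsub := badSet_swap hfm hf hsq hu hi hj hs'
      refine ⟨fun x hx => (hsub hx).1, fun h => ?_⟩
      have hfb : f ∈ badSet b := ⟨hfm, hf, i, j, k, l, hu, hi, hj, hk, hl, hs⟩
      exact (hsub (h hfb)).2 rfl
    · exact hcase ⟨f, hfm, hf, aniso_of_equiv hab hf (aniso_of_bad hf hsq hu hi hj hk hl hs hs')⟩

lemma pre_smul {b : Fin 4 → F[X]} (h : Pre b) {c : F} (hc : c ≠ 0) :
    Pre (fun m => C c * b m) := by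
  obtain ⟨h1, h2, h3, h4⟩ := h
  have hu : IsUnit (C c) := isUnit_C.2 hc.isUnit
  have hd : ∀ f m, f ∣ C c * b m ↔ f ∣ b m := fun f m => hu.dvd_mul_left
  refine ⟨fun m => mul_ne_zero hu.ne_zero (h1 m), fun m => ?_, ?_, ?_⟩
  · exact (((associated_unit_mul_left (b m) _ hu)).squarefree_iff).2 (h2 m)
  · intro f hm hi hdvd
    refine h3 f hm hi ?_
    have e : C c * b 0 * (C c * b 1) * (C c * b 2) * (C c * b 3)
      = C c ^ 4 * (b 0 * b 1 * b 2 * b 3) := by ring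
    rw [e] at hdvd
    exact (hu.pow 4).dvd_mul_left.1 hdvd
  · intro f hm hi i j k l huv hi' hj' hk' hl'
    simp only [hd] at hi' hj' hk' hl'
    obtain ⟨r, hr⟩ := h4 f hm hi i j k l huv hi' hj' hk' hl'
    refine ⟨C c * r, ?_⟩
    have e : -(C c * b i * (C c * b j)) - (C c * r) ^ 2 = C c ^ 2 * (-(b i * b j) - r ^ 2) := by
      ring
    rw [e]
    exact hr.mul_left _

lemma equiv_smul (b : Fin 4 → F[X]) {c : F} (hc : c ≠ 0) :
    DEquiv b (fun m => C c * b m) :=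
  ⟨algebraMap F[X] (RatFunc F) (C c), fun _ => 1, algMap_ne (C_ne_zero.2 hc),
    fun _ => one_ne_zero, fun m => by rw [map_mul]; ring⟩

lemma nonsquare_mul [Fintype F] {c d : F} (hc : ¬ IsSquare c) (hd0 : d ≠ 0) :
    IsSquare (c * d) ↔ ¬ IsSquare d := by
  classical
  have hc0 : c ≠ 0 := by rintro rfl; exact hc (IsSquare.zero)
  rw [← quadraticChar_one_iff_isSquare (mul_ne_zero hc0 hd0), map_mul,
    quadraticChar_neg_one_iff_not_isSquare.2 hc, ← quadraticChar_neg_one_iff_not_isSquare]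
  constructor <;> intro h <;> linarith

lemma exists_min [Fintype F] {b : Fin 4 → F[X]} (h : Pre b) :
    ∃ b', DEquiv b b' ∧ IsMinimized b' := by
  have mk : ∀ b' : Fin 4 → F[X], Pre b' →
      (Nat.card {m : Fin 4 // IsSquare ((b' m).leadingCoeff)} ≥
        Nat.card {m : Fin 4 // ¬ IsSquare ((b' m).leadingCoeff)}) → IsMinimized b' := by
    rintro b' ⟨h1, h2, h3, h4⟩ h5
    refine ⟨h1, h2, h3, ?_, h5⟩
    intro f hm hi i j k l huv hi' hj' hk' hl'
    exact (sqMod_iff _ _).2 (h4 f hm hi i j k l huv hi' hj' hk' hl')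
  by_cases hle : Nat.card {m : Fin 4 // IsSquare ((b m).leadingCoeff)} ≥
        Nat.card {m : Fin 4 // ¬ IsSquare ((b m).leadingCoeff)}
  · exact ⟨b, DEquiv.refl b, mk b h hle⟩
  · rw [ge_iff_le, not_le] at hle
    obtain ⟨m, hm⟩ : ∃ m, ¬ IsSquare ((b m).leadingCoeff) := by
      by_contra hno
      push Not at hno
      have : IsEmpty {m : Fin 4 // ¬ IsSquare ((b m).leadingCoeff)} := ⟨fun x => x.2 (hno x.1)⟩
      have h0 : Nat.card {m : Fin 4 // ¬ IsSquare ((b m).leadingCoeff)} = 0 :=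
        Nat.card_of_isEmpty
      omega
    have hc0 : (b m).leadingCoeff ≠ 0 := leadingCoeff_ne_zero.2 (h.1 m)
    refine ⟨_, equiv_smul b hc0, mk _ (pre_smul h hc0) ?_⟩
    have key : ∀ n, IsSquare ((C (b m).leadingCoeff * b n).leadingCoeff) ↔
        ¬ IsSquare ((b n).leadingCoeff) := fun n => by
      rw [leadingCoeff_mul, leadingCoeff_C]
      exact nonsquare_mul hm (leadingCoeff_ne_zero.2 (h.1 n))
    simp only [key, not_not]
    exact hle.le

end GlobalPart

/-- every diagonal quaternary quadratic form over `𝔽[t]` with nonzero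
coefficients is either anisotropic at some finite prime, or projectively equivalent to a
minimized diagonal quadratic form. -/
theorem minimization_quaternary
    {F : Type*} [Field F] [Fintype F] (hodd : ringChar F ≠ 2)
    (a : Fin 4 → F[X]) (ha : ∀ m, a m ≠ 0) :
    (∃ (f : F[X]) (hfm : f.Monic) (hf : Irreducible f),
      ∀ x : Fin 4 → (primeOfIrreducible hf).adicCompletion (RatFunc F),
        ∑ m, algebraMap F[X] ((primeOfIrreducible hf).adicCompletion (RatFunc F)) (a m)
            * x m ^ 2 = 0 → x = 0) ∨
    (∃ (b : Fin 4 → F[X]) (g : RatFunc F) (M : Matrix (Fin 4) (Fin 4) (RatFunc F)),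
      IsMinimized b ∧ g ≠ 0 ∧ IsUnit M ∧
      ∀ x : Fin 4 → RatFunc F,
        g * ∑ m, algebraMap F[X] (RatFunc F) (a m) * (M.mulVec x m) ^ 2 =
          ∑ m, algebraMap F[X] (RatFunc F) (b m) * (x m) ^ 2) := by
  rcases exists_pre a ha with ⟨f, hfm, hf, h⟩ | ⟨b, hab, hb⟩
  · exact Or.inl ⟨f, hfm, hf, h⟩
  · obtain ⟨b', hbb', hmin⟩ := exists_min hb
    obtain ⟨g, c, hg, hc, h⟩ := hab.trans hbb'
    refine Or.inr ⟨b', g, Matrix.diagonal c, hmin, hg, ?_, ?_⟩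
    · rw [Matrix.isUnit_diagonal, Pi.isUnit_iff]
      exact fun m => (hc m).isUnit
    · intro x
      rw [Finset.mul_sum]
      refine Finset.sum_congr rfl fun m _ => ?_
      rw [Matrix.mulVec_diagonal, ← h m]
      ring
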